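/- Let q_0(ξ) be a continuous nonvanishing function of ξ_n ∈ ℝ (for fixed ξ') of the form q_0 = e^ψ with ψ(ξ_n) ∈ H_{-1} (Fourier transform of an integrable function with one-sided decompositions), and write ψ = ψ_+ + ψ_- with ψ_± = h^± ψ, where F^{-1}ψ_+ is supported in [0,∞) and F^{-1}ψ_- in (-∞,0]. Set q_0^+ = e^{ψ_+}. Then the plus-integral of h^+ q_0^+ equals lim_{z_n→0+} F^{-1}_{ξ_n→z_n} ψ, i.e. (1/2π)∫^+ h^+ q_0^+ dξ_n = lim_{z_n→0+} [F^{-1} ψ](z_n) = lim_{z_n→0+}[F^{-1} log q_0](z_n). -/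

import Mathlib

open MeasureTheory

open scoped FourierTransform Convolution ContDiff Topology

theorem aux_integrable_tsum {F : ℕ → ℝ → ℂ} (hF : ∀ i, Integrable (F i))
    (hs : Summable fun i => ∫ a, ‖F i a‖) : Integrable (fun a => ∑' i, F i a) := by
  have h1 : (∑' i, ∫⁻ a, ‖F i a‖ₑ) ≠ ⊤ := by
    have (i : ℕ) : ∫⁻ a, ‖F i a‖ₑ = ENNReal.ofReal (∫ a, ‖F i a‖) := by
      rw [ofReal_integral_norm_eq_lintegral_enorm (hF i)]
    simp_rw [this]
    exact hs.tsum_ofReal_ne_top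
  have h2 : (∫⁻ a, ∑' i, ‖F i a‖ₑ) ≠ ⊤ := by
    rw [lintegral_tsum (fun i => (hF i).1.enorm)]
    exact h1
  have h3 : ∀ᵐ a, Summable fun i => F i a := by
    have := ae_lt_top' (AEMeasurable.ennreal_tsum fun i => (hF i).1.enorm) h2
    filter_upwards [this] with a ha
    have : Summable fun i => ‖F i a‖₊ := by
      apply ENNReal.tsum_coe_ne_top_iff_summable.1
      simpa [enorm] using ha.ne
    exact Summable.of_nnnorm this
  refine ⟨?_, ?_⟩
  · refine aestronglyMeasurable_of_tendsto_ae Filter.atTop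
      (f := fun n a => ∑ i ∈ Finset.range n, F i a) ?_ ?_
    · intro n
      exact (integrable_finsetSum _ fun i _ => hF i).1
    · filter_upwards [h3] with a ha
      exact ha.hasSum.tendsto_sum_nat
  · refine lt_of_le_of_lt (lintegral_mono fun a => ?_) h2.lt_top
    exact enorm_tsum_le_tsum_enorm

theorem aux_fourier_inj {f g : ℝ → ℂ} (hf : Integrable f) (hg : Integrable g)
    (h : ∀ ξ, 𝓕 f ξ = 𝓕 g ξ) : ∀ᵐ x, f x = g x := by
  have key : ∀ (u : ℝ → ℂ), Integrable u → ∀ φ : SchwartzMap ℝ ℂ,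
      ∫ x, 𝓕 u x • (𝓕⁻ φ) x = ∫ x, u x • φ x := by
    intro u hu φ
    have := VectorFourier.integral_fourierIntegral_smul_eq_flip (L := innerₗ ℝ)
      Real.continuous_fourierChar continuous_inner hu (𝓕⁻ φ : SchwartzMap ℝ ℂ).integrable
      (μ := volume) (ν := volume)
    refine this.trans ?_
    congr 1
    ext x
    congr 1
    have h2 : 𝓕 (𝓕⁻ φ) = φ := FourierTransform.fourier_fourierInv_eq φ
    have h3 := congrArg (fun s : SchwartzMap ℝ ℂ => s x) h2
    rw [← h3, SchwartzMap.fourier_coe, flip_innerₗ]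
    rfl
  apply ae_eq_of_integral_contDiff_smul_eq hf.locallyIntegrable hg.locallyIntegrable
  intro φ φ_smooth φ_cpt
  have hg₁ : HasCompactSupport (Complex.ofRealCLM ∘ φ) := φ_cpt.comp_left rfl
  have hg₂ : ContDiff ℝ ∞ (Complex.ofRealCLM ∘ φ) := by fun_prop
  have e1 := key f hf (hg₁.toSchwartzMap hg₂)
  have e2 := key g hg (hg₁.toSchwartzMap hg₂)
  have : 𝓕 f = 𝓕 g := funext h
  rw [this, e2] at e1
  simpa [mul_comm] using e1.symm

/-- iterated convolution: `cpow f k = f ⋆ ⋯ ⋆ f` with `k+1` factors -/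
noncomputable def cpow (f : ℝ → ℂ) : ℕ → ℝ → ℂ
  | 0 => f
  | k + 1 => f ⋆[ContinuousLinearMap.mul ℂ ℂ] (cpow f k)

theorem cpow_integrable {f : ℝ → ℂ} (hf : Integrable f) (k : ℕ) : Integrable (cpow f k) := by
  induction k with
  | zero => exact hf
  | succ k ih => exact hf.integrable_convolution _ ih

theorem cpow_fourier {f : ℝ → ℂ} (hf : Integrable f) (k : ℕ) (ξ : ℝ) :
    𝓕 (cpow f k) ξ = (𝓕 f ξ) ^ (k + 1) := by
  induction k with
  | zero => simp [cpow]
  | succ k ih =>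
    rw [cpow, Real.fourier_mul_convolution_eq hf (cpow_integrable hf k), ih]
    ring

theorem cpow_norm {f : ℝ → ℂ} (hf : Integrable f) (k : ℕ) :
    ∫ x, ‖cpow f k x‖ ≤ (∫ x, ‖f x‖) ^ (k + 1) := by
  induction k with
  | zero => simp [cpow]
  | succ k ih =>
    have h := integral_convolution (ContinuousLinearMap.mul ℝ ℝ) (μ := volume) (ν := volume)
      hf.norm (cpow_integrable hf k).norm
    calc ∫ x, ‖cpow f (k+1) x‖
        ≤ ∫ x, ((fun x => ‖f x‖) ⋆[ContinuousLinearMap.mul ℝ ℝ] (fun x => ‖cpow f k x‖)) x := by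
          apply integral_mono (cpow_integrable hf (k+1)).norm
          · exact hf.norm.integrable_convolution _ (cpow_integrable hf k).norm
          · intro x
            simp only [cpow, convolution_def]
            refine (norm_integral_le_integral_norm _).trans (le_of_eq ?_)
            simp
      _ = (∫ x, ‖f x‖) * ∫ x, ‖cpow f k x‖ := by rw [h]; rfl
      _ ≤ (∫ x, ‖f x‖) * (∫ x, ‖f x‖) ^ (k + 1) := by
          gcongr
      _ = _ := by ring

theorem cpow_supp {f : ℝ → ℂ} (hf : ∀ x : ℝ, x < 0 → f x = 0) (k : ℕ) :
    ∀ x : ℝ, x < 0 → cpow f k x = 0 := by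
  induction k with
  | zero => exact hf
  | succ k ih =>
    intro x hx
    simp only [cpow, convolution_def]
    rw [← integral_zero ℝ ℂ]
    congr 1
    ext t
    rcases lt_or_ge t 0 with ht | ht
    · simp [hf t ht]
    · simp [ih (x - t) (by linarith)]

theorem cpow_bound {f : ℝ → ℂ} (hf : ∀ x : ℝ, x < 0 → f x = 0) {M δ : ℝ} (hM : 0 ≤ M)
    (hb : ∀ x, 0 < x → x < δ → ‖f x‖ ≤ M) (k : ℕ) :
    ∀ x : ℝ, 0 < x → x < δ → ‖cpow f k x‖ ≤ M ^ (k + 1) * x ^ k := by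
  induction k with
  | zero => simpa [cpow] using hb
  | succ k ih =>
    intro x hx hxδ
    simp only [cpow, convolution_def]
    have h1 : ∫ t, (ContinuousLinearMap.mul ℂ ℂ) (f t) (cpow f k (x - t)) =
        ∫ t in Set.Ioo 0 x, (ContinuousLinearMap.mul ℂ ℂ) (f t) (cpow f k (x - t)) := by
      rw [← integral_Icc_eq_integral_Ioo, setIntegral_eq_integral_of_forall_compl_eq_zero]
      intro t ht
      rcases lt_or_ge t 0 with h | h
      · simp [hf t h]
      · have : x < t := by
          by_contra hc
          exact ht ⟨h, not_lt.1 hc⟩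
        simp [cpow_supp hf k (x - t) (by linarith)]
    rw [h1]
    have h2 := norm_setIntegral_le_of_norm_le_const (μ := volume) (s := Set.Ioo 0 x)
      (f := fun t => (ContinuousLinearMap.mul ℂ ℂ) (f t) (cpow f k (x - t)))
      (C := M * (M ^ (k + 1) * x ^ k)) (by simp) (by
        intro t ht
        simp only [ContinuousLinearMap.mul_apply', norm_mul]
        have a1 := hb t ht.1 (ht.2.trans hxδ)
        have a2 := ih (x - t) (by linarith [ht.2]) (by linarith [ht.1])
        have a3 : (x - t) ^ k ≤ x ^ k :=
          pow_le_pow_left₀ (by linarith [ht.2]) (by linarith [ht.1]) k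
        have a4 : M ^ (k + 1) * (x - t) ^ k ≤ M ^ (k + 1) * x ^ k :=
          mul_le_mul_of_nonneg_left a3 (by positivity)
        exact mul_le_mul a1 (a2.trans a4) (norm_nonneg _) hM)
    refine h2.trans (le_of_eq ?_)
    simp [Measure.real, hx.le]
    ring

/-- the function whose Fourier transform is `exp (𝓕 f) - 1` -/
noncomputable def cexpf (f : ℝ → ℂ) (x : ℝ) : ℂ :=
  ∑' k : ℕ, ((k + 1).factorial : ℂ)⁻¹ * cpow f k x

theorem cexpf_aux_summable (A : ℝ) :
    Summable fun k : ℕ => ((k + 1).factorial : ℝ)⁻¹ * A ^ (k + 1) := by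
  have := (summable_nat_add_iff 1).2 (Real.summable_pow_div_factorial A)
  simpa [div_eq_inv_mul] using this

theorem cexpf_aux {f : ℝ → ℂ} (hf : Integrable f) :
    Summable fun k : ℕ => ∫ x, ‖((k + 1).factorial : ℂ)⁻¹ * cpow f k x‖ := by
  refine Summable.of_nonneg_of_le (fun k => integral_nonneg fun x => norm_nonneg _) ?_
    (cexpf_aux_summable (∫ x, ‖f x‖))
  intro k
  simp only [norm_mul, norm_inv, Complex.norm_natCast, integral_const_mul]
  gcongr
  exact cpow_norm hf k

theorem cexpf_integrable {f : ℝ → ℂ} (hf : Integrable f) : Integrable (cexpf f) :=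
  aux_integrable_tsum (fun k => (cpow_integrable hf k).const_mul _) (cexpf_aux hf)

theorem cexpf_fourier {f : ℝ → ℂ} (hf : Integrable f) (ξ : ℝ) :
    𝓕 (cexpf f) ξ = Complex.exp (𝓕 f ξ) - 1 := by
  have hs := hasSum_integral_of_summable_integral_norm (μ := (volume : Measure ℝ))
    (F := fun (k : ℕ) x => Real.fourierChar (-(x * ξ)) •
      (((k + 1).factorial : ℂ)⁻¹ * cpow f k x)) (by
      intro k
      have := (Real.fourierIntegral_convergent_iff ξ).2
        ((cpow_integrable hf k).const_mul ((k + 1).factorial : ℂ)⁻¹)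
      simpa [mul_comm] using this) (by
      simpa only [Circle.norm_smul] using cexpf_aux hf)
  have e1 : 𝓕 (cexpf f) ξ = ∫ x, ∑' k : ℕ, Real.fourierChar (-(x * ξ)) •
      (((k + 1).factorial : ℂ)⁻¹ * cpow f k x) := by
    rw [Real.fourier_real_eq]
    congr 1
    ext x
    simp only [cexpf, Circle.smul_def, smul_eq_mul]
    rw [tsum_mul_left]
  have e2 : ∀ k : ℕ, ∫ x, Real.fourierChar (-(x * ξ)) •
      (((k + 1).factorial : ℂ)⁻¹ * cpow f k x) = (𝓕 f ξ) ^ (k + 1) / ((k + 1).factorial : ℂ) := by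
    intro k
    rw [← cpow_fourier hf, Real.fourier_real_eq, div_eq_inv_mul, ← integral_const_mul]
    congr 1
    ext x
    simp only [Circle.smul_def, smul_eq_mul]
    ring
  rw [← e1] at hs
  simp only [e2] at hs
  have h3 : HasSum (fun k : ℕ => (𝓕 f ξ) ^ k / (k.factorial : ℂ)) (Complex.exp (𝓕 f ξ)) := by
    rw [Complex.exp_eq_exp_ℂ]
    exact NormedSpace.expSeries_div_hasSum_exp (𝓕 f ξ)
  have h4 := (hasSum_nat_add_iff' 1).2 h3
  simp at h4
  exact hs.unique h4

theorem cexpf_bound {f : ℝ → ℂ} (hf : ∀ x : ℝ, x < 0 → f x = 0) {M δ : ℝ} (hM : 0 ≤ M)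
    (hδ : δ ≤ 1) (hb : ∀ x, 0 < x → x < δ → ‖f x‖ ≤ M) :
    ∃ C : ℝ, ∀ x, 0 < x → x < δ → ‖cexpf f x - f x‖ ≤ x * C := by
  have hS := (summable_nat_add_iff 1).2 (cexpf_aux_summable M)
  refine ⟨∑' k : ℕ, ((k + 1 + 1).factorial : ℝ)⁻¹ * M ^ (k + 1 + 1), fun x hx hxδ => ?_⟩
  have hle : ∀ k : ℕ, ‖((k + 1 + 1).factorial : ℂ)⁻¹ * cpow f (k + 1) x‖ ≤
      x * (((k + 1 + 1).factorial : ℝ)⁻¹ * M ^ (k + 1 + 1)) := by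
    intro k
    have h1 := cpow_bound hf hM hb (k + 1) x hx hxδ
    have h2 : x ^ (k + 1) ≤ x := pow_le_of_le_one hx.le (by linarith) (by simp)
    have h3 : M ^ (k + 1 + 1) * x ^ (k + 1) ≤ M ^ (k + 1 + 1) * x := by gcongr
    rw [norm_mul, norm_inv, Complex.norm_natCast]
    calc _ ≤ ((k + 1 + 1).factorial : ℝ)⁻¹ * (M ^ (k + 1 + 1) * x) := by
          gcongr
          exact h1.trans h3
      _ = _ := by ring
  have hS' := hS.mul_left x
  have hs1 : Summable fun k : ℕ => ((k + 1 + 1).factorial : ℂ)⁻¹ * cpow f (k + 1) x :=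
    Summable.of_norm_bounded hS' hle
  have hs2 : Summable fun k : ℕ => ((k + 1).factorial : ℂ)⁻¹ * cpow f k x :=
    (summable_nat_add_iff 1).1 hs1
  have : cexpf f x - f x = ∑' k : ℕ, ((k + 1 + 1).factorial : ℂ)⁻¹ * cpow f (k + 1) x := by
    rw [cexpf, hs2.tsum_eq_zero_add]
    simp [cpow]
  rw [this, ← tsum_mul_left]
  exact tsum_of_norm_bounded hS'.hasSum hle

theorem tendsto_of_ae_eq {g G : ℝ → ℂ} {L : ℂ} (hg : ContinuousOn g (Set.Ioi 0))
    (hae : ∀ᵐ x, G x = g x) (hG : Filter.Tendsto G (𝓝[>] 0) (𝓝 L)) :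
    Filter.Tendsto g (𝓝[>] 0) (𝓝 L) := by
  rw [(Metric.nhds_basis_closedBall).tendsto_right_iff] at hG ⊢
  intro ε hε
  obtain ⟨δ, hδ, hsub⟩ := mem_nhdsGT_iff_exists_Ioo_subset.1 (hG ε hε)
  have hδ : (0:ℝ) < δ := hδ
  filter_upwards [Ioo_mem_nhdsGT hδ] with x hx
  by_contra hc
  have hopen : IsOpen (Set.Ioo 0 δ ∩ g ⁻¹' (Metric.closedBall L ε)ᶜ) :=
    (hg.mono fun y hy => hy.1).isOpen_inter_preimage isOpen_Ioo
      Metric.isClosed_closedBall.isOpen_compl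
  have hpos := hopen.measure_pos volume ⟨x, hx, hc⟩
  have hzero : volume (Set.Ioo 0 δ ∩ g ⁻¹' (Metric.closedBall L ε)ᶜ) = 0 := by
    refine measure_mono_null ?_ (ae_iff.1 hae)
    intro y hy heq
    apply hy.2
    rw [← heq]
    exact hsub hy.1
  exact hpos.ne' hzero

/-- Formula (6.7): with `q₀ = e^ψ`, `ψ = F(f₊ + f₋)` where `f₊` is supported in `[0,∞)`
and `f₋` in `(-∞,0]`, `ψ₊ = F f₊`, and `q₀⁺ = e^{ψ₊}` with `h⁺q₀⁺ = q₀⁺ - 1 = F g`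
(`g` supported in `[0,∞)`), the plus-integral `(1/2π)∫⁺ h⁺q₀⁺ dξ_n`, i.e. the right
limit of `g` at `0`, equals `lim_{z→0+} [F⁻¹ψ](z) = lim_{z→0+} (f₊ + f₋)(z)`. -/
theorem stmt_18 (fp fm g : ℝ → ℂ) (L : ℂ)
    (hfp_int : Integrable fp) (hfp_supp : ∀ x : ℝ, x < 0 → fp x = 0)
    (hfp_cont : ContinuousOn fp (Set.Ioi 0))
    (hfm_supp : ∀ x : ℝ, 0 < x → fm x = 0)
    (hg_int : Integrable g) (hg_supp : ∀ x : ℝ, x < 0 → g x = 0)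
    (hg_cont : ContinuousOn g (Set.Ioi 0))
    (ψp : ℝ → ℂ)
    (hψp : ∀ ξ : ℝ, ψp ξ = ∫ x : ℝ, Complex.exp (-Complex.I * x * ξ) * fp x)
    (hrep : ∀ ξ : ℝ, Complex.exp (ψp ξ) = 1 + ∫ x : ℝ, Complex.exp (-Complex.I * x * ξ) * g x)
    (hL : Filter.Tendsto (fun z : ℝ => fp z + fm z) (nhdsWithin 0 (Set.Ioi 0)) (nhds L)) :
    Filter.Tendsto g (nhdsWithin 0 (Set.Ioi 0)) (nhds L) := by
  have hf0 : Filter.Tendsto fp (𝓝[>] 0) (𝓝 L) := by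
    refine hL.congr' ?_
    filter_upwards [self_mem_nhdsWithin] with z hz
    rw [hfm_supp z hz, add_zero]
  have conv : ∀ (u : ℝ → ℂ) (ξ : ℝ), 𝓕 u ξ =
      ∫ x : ℝ, Complex.exp (-Complex.I * x * ((2 * Real.pi * ξ : ℝ) : ℂ)) * u x := by
    intro u ξ
    rw [Real.fourier_real_eq_integral_exp_smul]
    congr 1
    ext x
    rw [smul_eq_mul]
    congr 2
    push_cast
    ring
  have hF : ∀ ξ, 𝓕 (cexpf fp) ξ = 𝓕 g ξ := by
    intro ξ
    have h := hrep (2 * Real.pi * ξ)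
    rw [hψp, ← conv, ← conv] at h
    rw [cexpf_fourier hfp_int, h]
    ring
  have hae := aux_fourier_inj (cexpf_integrable hfp_int) hg_int hF
  refine tendsto_of_ae_eq hg_cont hae ?_
  have hbd : ∀ᶠ x in 𝓝[>] (0:ℝ), ‖fp x‖ ≤ ‖L‖ + 1 :=
    (hf0.norm.eventually_lt_const (lt_add_one ‖L‖)).mono fun x hx => hx.le
  obtain ⟨δ, hδ, hsub⟩ := mem_nhdsGT_iff_exists_Ioo_subset.1 hbd
  have hδ : (0:ℝ) < δ := hδ
  obtain ⟨C, hC⟩ := cexpf_bound (δ := min δ 1) hfp_supp (by positivity : 0 ≤ ‖L‖ + 1)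
    (min_le_right _ _) (fun x hx hx' => hsub ⟨hx, hx'.trans_le (min_le_left _ _)⟩)
  have hdiff : Filter.Tendsto (fun x => cexpf fp x - fp x) (𝓝[>] 0) (𝓝 0) := by
    refine squeeze_zero_norm' (a := fun x => x * C) ?_ ?_
    · filter_upwards [Ioo_mem_nhdsGT (lt_min hδ one_pos)] with x hx
      exact hC x hx.1 hx.2
    · have : Filter.Tendsto (fun x : ℝ => x * C) (𝓝 0) (𝓝 (0 * C)) :=
        (continuous_id.mul continuous_const).tendsto 0
      rw [zero_mul] at this
      exact this.mono_left nhdsWithin_le_nhds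
  have := hdiff.add hf0
  simpa using this
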